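/- arXiv:2301.00237 — 2 statements merged into one kernel-verified Lean document; each statement's English description precedes it below -/
import Mathlib

section
/- A finite set Ξ ⊆ ℤ_{≥0}^I is M♮-convex if and only if: (i) whenever ξ, ξ' ∈ Ξ and the coordinate sum of ξ exceeds that of ξ', there exists i with ξ_i > ξ'_i such that ξ − χ_i ∈ Ξ and ξ' + χ_i ∈ Ξ; and (ii) whenever ξ, ξ' ∈ Ξ have equal coordinate sums, for every i with ξ_i > ξ'_i there exists j with ξ_j < ξ'_j such that ξ − χ_i + χ_j ∈ Ξ and ξ' + χ_i − χ_j ∈ Ξ. -/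
/-- Unit vector at coordinate `i`. -/
def unitv {I : Type*} [DecidableEq I] (i : I) : I → ℤ := fun k => if k = i then 1 else 0

/-- `Ξ` is an M♮-convex set of integer vectors. -/
def MNatConvex {I : Type*} [DecidableEq I] (Ξ : Set (I → ℤ)) : Prop :=
  ∀ ξ ∈ Ξ, ∀ ξ' ∈ Ξ, ∀ i : I, ξ' i < ξ i →
    ((ξ - unitv i ∈ Ξ ∧ ξ' + unitv i ∈ Ξ) ∨
      ∃ j : I, ξ j < ξ' j ∧ ξ - unitv i + unitv j ∈ Ξ ∧ ξ' + unitv i - unitv j ∈ Ξ)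

def dst {J : Type*} [Fintype J] (x y : J → ℤ) : ℕ := ∑ k, (x k - y k).natAbs

lemma dst_comm {J : Type*} [Fintype J] (x y : J → ℤ) : dst x y = dst y x := by
  unfold dst
  exact Finset.sum_congr rfl fun k _ => by omega

lemma dst_right {J : Type*} [Fintype J] [DecidableEq J] (x y : J → ℤ) (i j : J)
    (hi : y i < x i) (hj : x j < y j) : dst x (y + unitv i - unitv j) < dst x y := by
  unfold dst
  have hij : i ≠ j := by rintro rfl; omega
  apply Finset.sum_lt_sum
  · intro k _
    simp only [Pi.add_apply, Pi.sub_apply, unitv]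
    split_ifs <;> subst_vars <;> omega
  · refine ⟨i, Finset.mem_univ _, ?_⟩
    simp only [Pi.add_apply, Pi.sub_apply, unitv]
    split_ifs <;> omega

lemma dst_left {J : Type*} [Fintype J] [DecidableEq J] (x y : J → ℤ) (i j : J)
    (hi : y i < x i) (hj : x j < y j) : dst (x - unitv i + unitv j) y < dst x y := by
  have := dst_right y x j i hj hi
  rw [dst_comm, dst_comm x y]
  convert this using 2
  abel

lemma core {J : Type*} [Fintype J] [DecidableEq J] (B : Set (J → ℤ))
    (P : ∀ x ∈ B, ∀ y ∈ B, ∀ u, y u < x u → ∃ v, x v < y v ∧ x - unitv u + unitv v ∈ B)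
    (Q : ∀ x ∈ B, ∀ y ∈ B, ∀ u, y u < x u → ∃ v, x v < y v ∧ y + unitv u - unitv v ∈ B) :
    ∀ n : ℕ, ∀ x ∈ B, ∀ y ∈ B, dst x y = n → ∀ i, y i < x i →
      ∃ j, x j < y j ∧ x - unitv i + unitv j ∈ B ∧ y + unitv i - unitv j ∈ B := by
  intro n
  induction n using Nat.strong_induction_on with
  | _ n IH =>
  intro x hx y hy hd i hi
  obtain ⟨j, hj, hyj⟩ := Q x hx y hy i hi
  obtain ⟨k, hk, hxk⟩ := Q y hy x hx j hj
  by_cases hki : k = i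
  · subst hki
    refine ⟨j, hj, ?_, hyj⟩
    convert hxk using 1
    abel
  have weak : ∃ m, x m < y m ∧ x - unitv k + unitv m ∈ B ∧ y + unitv k - unitv m ∈ B := by
    obtain ⟨l, hl, h1, h2⟩ := IH _ (hd ▸ dst_right x y i j hi hj) x hx _ hyj rfl k (by
      simp only [Pi.add_apply, Pi.sub_apply, unitv]
      split_ifs <;> subst_vars <;> omega)
    have hl' : x l < y l := by
      simp only [Pi.add_apply, Pi.sub_apply, unitv] at hl
      split_ifs at hl <;> subst_vars <;> omega
    obtain ⟨m, hm, h3⟩ := Q _ h2 y hy k (by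
      simp only [Pi.add_apply, Pi.sub_apply, unitv]
      split_ifs <;> subst_vars <;> omega)
    have hm' : m = j ∨ m = l := by
      by_contra hcon
      push Not at hcon
      simp only [Pi.add_apply, Pi.sub_apply, unitv, if_neg hcon.1, if_neg hcon.2] at hm
      split_ifs at hm <;> omega
    rcases hm' with rfl | rfl
    · refine ⟨m, hj, ?_, h3⟩
      convert hxk using 1
      abel
    · exact ⟨m, hl', h1, h3⟩
  have hik : ¬ i = k := fun h => hki h.symm
  obtain ⟨m, hm, hxm, hym⟩ := weak
  obtain ⟨v, hv, h1, h2⟩ := IH _ (hd ▸ dst_right x y k m hk hm) x hx _ hym rfl i (by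
      simp only [Pi.add_apply, Pi.sub_apply, unitv]
      split_ifs <;> subst_vars <;> omega)
  obtain ⟨w, hw, h3, h4⟩ := IH _ (hd ▸ dst_left x y k m hk hm) _ hxm y hy rfl i (by
      simp only [Pi.add_apply, Pi.sub_apply, unitv]
      split_ifs <;> subst_vars <;> omega)
  have hv' : x v < y v := by
      simp only [Pi.add_apply, Pi.sub_apply, unitv] at hv
      split_ifs at hv <;> subst_vars <;> omega
  have hw' : x w < y w := by
      simp only [Pi.add_apply, Pi.sub_apply, unitv] at hw
      split_ifs at hw <;> subst_vars <;> omega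
  obtain ⟨t, ht, h5⟩ := Q _ h2 y hy i (by
      simp only [Pi.add_apply, Pi.sub_apply, unitv]
      split_ifs <;> subst_vars <;> omega)
  have ht' : t = m ∨ t = v := by
      by_contra hcon
      push Not at hcon
      simp only [Pi.add_apply, Pi.sub_apply, unitv, if_neg hcon.1, if_neg hcon.2] at ht
      split_ifs at ht <;> omega
  obtain ⟨s, hs, h6⟩ := P x hx _ h3 i (by
      simp only [Pi.add_apply, Pi.sub_apply, unitv]
      split_ifs <;> subst_vars <;> omega)
  have hs' : s = m ∨ s = w := by
      by_contra hcon
      push Not at hcon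
      simp only [Pi.add_apply, Pi.sub_apply, unitv, if_neg hcon.1, if_neg hcon.2] at hs
      split_ifs at hs <;> omega
  rcases ht' with rfl | rfl
  · rcases hs' with rfl | rfl
    · exact ⟨s, hm, h6, h5⟩
    · exact ⟨s, hw', h6, h4⟩
  · exact ⟨t, hv', h1, h5⟩

lemma weak_one {J : Type*} [Fintype J] [DecidableEq J] (B : Set (J → ℤ))
    (W : ∀ x ∈ B, ∀ y ∈ B, ∀ u, y u < x u → ∃ i j, y i < x i ∧ x j < y j ∧
      x - unitv i + unitv j ∈ B ∧ y + unitv i - unitv j ∈ B) :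
    ∀ n : ℕ, ∀ x ∈ B, ∀ y ∈ B, dst x y = n → ∀ u, y u < x u →
      (∃ v, x v < y v ∧ x - unitv u + unitv v ∈ B) ∧
      (∃ v, x v < y v ∧ y + unitv u - unitv v ∈ B) := by
  intro n
  induction n using Nat.strong_induction_on with
  | _ n IH =>
  intro x hx y hy hd u hu
  obtain ⟨i, j, hi, hj, h1, h2⟩ := W x hx y hy u hu
  by_cases hui : u = i
  · subst hui
    exact ⟨⟨j, hj, h1⟩, ⟨j, hj, h2⟩⟩
  obtain ⟨v, hv, h3⟩ := (IH _ (hd ▸ dst_right x y i j hi hj) x hx _ h2 rfl u (by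
      simp only [Pi.add_apply, Pi.sub_apply, unitv]
      split_ifs <;> subst_vars <;> omega)).1
  obtain ⟨w, hw, h4⟩ := (IH _ (hd ▸ dst_left x y i j hi hj) _ h1 y hy rfl u (by
      simp only [Pi.add_apply, Pi.sub_apply, unitv]
      split_ifs <;> subst_vars <;> omega)).2
  refine ⟨⟨v, ?_, h3⟩, ⟨w, ?_, h4⟩⟩
  · simp only [Pi.add_apply, Pi.sub_apply, unitv] at hv
    split_ifs at hv <;> subst_vars <;> omega
  · simp only [Pi.add_apply, Pi.sub_apply, unitv] at hw
    split_ifs at hw <;> subst_vars <;> omega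

lemma sum_unitv {J : Type*} [Fintype J] [DecidableEq J] (i : J) : ∑ k, unitv i k = 1 := by
  simp [unitv]

lemma sum_add_u {J : Type*} [Fintype J] [DecidableEq J] (x : J → ℤ) (i : J) :
    ∑ k, (x + unitv i) k = ∑ k, x k + 1 := by
  simp only [Pi.add_apply, Finset.sum_add_distrib, sum_unitv]

lemma sum_sub_u {J : Type*} [Fintype J] [DecidableEq J] (x : J → ℤ) (i : J) :
    ∑ k, (x - unitv i) k = ∑ k, x k - 1 := by
  simp only [Pi.sub_apply, Finset.sum_sub_distrib, sum_unitv]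

lemma mnat_i {I : Type*} [Fintype I] [DecidableEq I] (Ξ : Set (I → ℤ)) (M : MNatConvex Ξ) :
    ∀ n : ℕ, ∀ x ∈ Ξ, ∀ y ∈ Ξ, dst x y = n → (∑ i, y i) < (∑ i, x i) →
      ∃ i : I, y i < x i ∧ x - unitv i ∈ Ξ ∧ y + unitv i ∈ Ξ := by
  intro n
  induction n using Nat.strong_induction_on with
  | _ n IH =>
  intro x hx y hy hd hlt
  obtain ⟨i, -, hi⟩ := Finset.exists_lt_of_sum_lt hlt
  rcases M x hx y hy i hi with h | ⟨j, hj, h1, h2⟩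
  · exact ⟨i, hi, h⟩
  obtain ⟨k, hk, h3, h4⟩ := IH _ (hd ▸ dst_right x y i j hi hj) x hx _ h2 rfl (by
    rw [sum_sub_u, sum_add_u]; omega)
  obtain ⟨l, hl, h5, h6⟩ := IH _ (hd ▸ dst_left x y i j hi hj) _ h1 y hy rfl (by
    rw [sum_add_u, sum_sub_u]; omega)
  have hk' : y k < x k := by
    simp only [Pi.add_apply, Pi.sub_apply, unitv] at hk
    split_ifs at hk <;> subst_vars <;> omega
  have hl' : y l < x l := by
    simp only [Pi.add_apply, Pi.sub_apply, unitv] at hl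
    split_ifs at hl <;> subst_vars <;> omega
  have hX : x - unitv l ∈ Ξ ∨ x - unitv i ∈ Ξ := by
    rcases M x hx _ h5 l (by
      simp only [Pi.add_apply, Pi.sub_apply, unitv]
      split_ifs <;> subst_vars <;> omega) with h | ⟨m, hm, -, h⟩
    · exact Or.inl h.1
    · right
      have : m = j := by
        by_contra hcon
        simp only [Pi.add_apply, Pi.sub_apply, unitv, if_neg hcon] at hm
        split_ifs at hm <;> omega
      subst this
      convert h using 1
      abel
  have hY : y + unitv k ∈ Ξ ∨ y + unitv i ∈ Ξ := by
    rcases M _ h4 y hy k (by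
      simp only [Pi.add_apply, Pi.sub_apply, unitv]
      split_ifs <;> subst_vars <;> omega) with h | ⟨m, hm, h, -⟩
    · exact Or.inl h.2
    · right
      have : m = j := by
        by_contra hcon
        simp only [Pi.add_apply, Pi.sub_apply, unitv, if_neg hcon] at hm
        split_ifs at hm <;> omega
      subst this
      convert h using 1
      abel
  rcases hX with hX | hX
  · exact ⟨l, hl', hX, h6⟩
  rcases hY with hY | hY
  · exact ⟨k, hk', h3, hY⟩
  · exact ⟨i, hi, hX, hY⟩

def eo {I : Type*} [DecidableEq I] : Option I → I → ℤ
  | none => 0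
  | some i => unitv i

def LB {I : Type*} [Fintype I] (Ξ : Set (I → ℤ)) : Set (Option I → ℤ) :=
  {x | (fun i => x (some i)) ∈ Ξ ∧ ∑ k, x k = 0}

lemma eo_eq {I : Type*} [DecidableEq I] (a : Option I) (i : I) : unitv a (some i) = eo a i := by
  cases a <;> simp [eo, unitv]

lemma LB_sub_add {I : Type*} [Fintype I] [DecidableEq I] (Ξ : Set (I → ℤ)) (x : Option I → ℤ)
    (hx : ∑ k, x k = 0) (a b : Option I) :
    x - unitv a + unitv b ∈ LB Ξ ↔ (fun i => x (some i)) - eo a + eo b ∈ Ξ := by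
  have h : (fun i => (x - unitv a + unitv b) (some i)) = (fun i => x (some i)) - eo a + eo b := by
    ext i
    simp [eo_eq]
  simp only [LB, Set.mem_ofPred_eq, h, sum_add_u, sum_sub_u, hx]
  simp

lemma LB_add_sub {I : Type*} [Fintype I] [DecidableEq I] (Ξ : Set (I → ℤ)) (x : Option I → ℤ)
    (hx : ∑ k, x k = 0) (a b : Option I) :
    x + unitv a - unitv b ∈ LB Ξ ↔ (fun i => x (some i)) + eo a - eo b ∈ Ξ := by
  rw [show x + unitv a - unitv b = x - unitv b + unitv a by abel, LB_sub_add Ξ x hx,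
    show (fun i => x (some i)) + eo a - eo b = (fun i => x (some i)) - eo b + eo a by abel]

/-- a finite set of nonnegative integer vectors is M♮-convex iff
(i) between vectors of different coordinate sums one can move by a single unit step in
both directions, and (ii) between vectors of equal coordinate sums every decreasing
coordinate admits a compensating exchange coordinate. -/
theorem MNatConvex_iff {I : Type*} [Fintype I] [DecidableEq I]
    (Ξ : Set (I → ℤ)) (hfin : Ξ.Finite) (hpos : ∀ ξ ∈ Ξ, ∀ i, 0 ≤ ξ i) :
    MNatConvex Ξ ↔
      ((∀ ξ ∈ Ξ, ∀ ξ' ∈ Ξ, (∑ i, ξ' i) < (∑ i, ξ i) →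
          ∃ i : I, ξ' i < ξ i ∧ ξ - unitv i ∈ Ξ ∧ ξ' + unitv i ∈ Ξ) ∧
        (∀ ξ ∈ Ξ, ∀ ξ' ∈ Ξ, (∑ i, ξ i) = (∑ i, ξ' i) →
          ∀ i : I, ξ' i < ξ i →
            ∃ j : I, ξ j < ξ' j ∧ ξ - unitv i + unitv j ∈ Ξ ∧
              ξ' + unitv i - unitv j ∈ Ξ)) := by
  constructor
  · intro M
    have hi := fun x hx y hy => mnat_i Ξ M _ x hx y hy rfl
    refine ⟨hi, ?_⟩
    intro x hx y hy hs i hlt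
    refine Exists.imp (fun j h => ⟨h.1, h.2.1.1, h.2.2.1⟩) (core {z | z ∈ Ξ ∧ ∑ k, z k = ∑ k, x k} ?_ ?_ _ x ⟨hx, rfl⟩ y
      ⟨hy, hs.symm⟩ rfl i hlt)
    · rintro a ⟨ha, hsa⟩ b ⟨hb, hsb⟩ u hu
      rcases M a ha b hb u hu with ⟨h1, h2⟩ | ⟨j, hj, h1, h2⟩
      · obtain ⟨k, hk, -, h4⟩ := hi b hb _ h1 (by rw [sum_sub_u]; omega)
        refine ⟨k, ?_, h4, by rw [sum_add_u, sum_sub_u]; omega⟩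
        simp only [Pi.sub_apply, unitv] at hk
        split_ifs at hk <;> subst_vars <;> omega
      · exact ⟨j, hj, h1, by rw [sum_add_u, sum_sub_u]; omega⟩
    · rintro a ⟨ha, hsa⟩ b ⟨hb, hsb⟩ u hu
      rcases M a ha b hb u hu with ⟨h1, h2⟩ | ⟨j, hj, h1, h2⟩
      · obtain ⟨k, hk, h3, -⟩ := hi _ h2 a ha (by rw [sum_add_u]; omega)
        refine ⟨k, ?_, h3, by rw [sum_sub_u, sum_add_u]; omega⟩
        simp only [Pi.add_apply, unitv] at hk
        split_ifs at hk <;> subst_vars <;> omega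
      · exact ⟨j, hj, h2, by rw [sum_sub_u, sum_add_u]; omega⟩
  · rintro ⟨H1, H2⟩
    have W : ∀ x ∈ LB Ξ, ∀ y ∈ LB Ξ, ∀ u, y u < x u → ∃ i j, y i < x i ∧ x j < y j ∧
        x - unitv i + unitv j ∈ LB Ξ ∧ y + unitv i - unitv j ∈ LB Ξ := by
      rintro x ⟨hx, hsx⟩ y ⟨hy, hsy⟩ u hu
      simp only [LB_sub_add Ξ x hsx, LB_add_sub Ξ y hsy]
      rw [Fintype.sum_option] at hsx hsy
      rcases lt_trichotomy (∑ i, y (some i)) (∑ i, x (some i)) with h | h | h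
      · obtain ⟨i, hi, h1, h2⟩ := H1 _ hx _ hy h
        exact ⟨some i, none, hi, by omega, by simpa [eo] using h1, by simpa [eo] using h2⟩
      · cases u with
        | none => omega
        | some i =>
          obtain ⟨j, hj, h1, h2⟩ := H2 _ hx _ hy h.symm i hu
          exact ⟨some i, some j, hu, hj, h1, h2⟩
      · obtain ⟨i, hi, h1, h2⟩ := H1 _ hy _ hx h
        exact ⟨none, some i, by omega, hi, by simpa [eo] using h2, by simpa [eo] using h1⟩
    have O := weak_one (LB Ξ) W
    have C := core (LB Ξ) (fun x hx y hy u hu => (O _ x hx y hy rfl u hu).1)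
      (fun x hx y hy u hu => (O _ x hx y hy rfl u hu).2)
    intro x hx y hy i hi
    let L : (I → ℤ) → Option I → ℤ := fun z k => k.elim (-∑ i, z i) z
    have hL : ∀ z, ∑ k, L z k = 0 := fun z => by simp [L, Fintype.sum_option]
    obtain ⟨j, hj, h1, h2⟩ := C _ (L x) ⟨hx, hL x⟩ (L y) ⟨hy, hL y⟩ rfl (some i) hi
    rw [LB_sub_add Ξ _ (hL x)] at h1
    rw [LB_add_sub Ξ _ (hL y)] at h2
    cases j with
    | none =>
      left
      simp only [eo, add_zero, sub_zero] at h1 h2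
      exact ⟨h1, h2⟩
    | some j => exact Or.inr ⟨j, hj, h1, h2⟩
end

section
/- If the greedy rule on a nonempty downward-closed collection F of subsets of a finite set X satisfies path independence for every injective weight function, then (X, F) is a matroid. Conversely, if (X, F) is a matroid then for all weight functions the greedy rule satisfies path independence and the law of aggregate demand. -/
open Finset

/-- `F` is the collection of independent sets of a matroid on the finite ground set `α`. -/
def IsMatroidIndep {α : Type*} [DecidableEq α] [Fintype α] (F : Set (Finset α)) : Prop :=
  ∅ ∈ F ∧ (∀ Y ∈ F, ∀ Z ⊆ Y, Z ∈ F) ∧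
    ∀ Y₁ ∈ F, ∀ Y₂ ∈ F, Y₁.card < Y₂.card → ∃ x ∈ Y₂ \ Y₁, insert x Y₁ ∈ F

open scoped Classical in
/-- One pass of the greedy rule with fuel: starting from the chosen set `S`, repeatedly
add the highest-weight element `x` of `A` not yet chosen such that the chosen set
together with `x` is contained in some member of `F`. -/
noncomputable def greedyAux {α : Type*} [DecidableEq α] (F : Set (Finset α)) (w : α → ℝ) :
    ℕ → Finset α → Finset α → Finset α
  | 0, _, S => S
  | n + 1, A, S =>
      let cands := (A \ S).filter fun x => ∃ Y ∈ F, insert x S ⊆ Y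
      if h : cands.Nonempty then
        greedyAux F w n A (insert (cands.exists_max_image w h).choose S)
      else S

/-- The greedy rule: from the available set `A`, iteratively add the highest-weight
element that keeps the chosen set inside some member of `F`. -/
noncomputable def greedy {α : Type*} [DecidableEq α] (F : Set (Finset α)) (w : α → ℝ)
    (A : Finset α) : Finset α :=
  greedyAux F w A.card A ∅

/-- Path independence of a choice rule. -/
def PathIndependent {α : Type*} [DecidableEq α] (C : Finset α → Finset α) : Prop :=
  ∀ A B : Finset α, C (A ∪ B) = C (C A ∪ B)

/-- The law of aggregate demand. -/
def LawOfAggregateDemand {α : Type*} (C : Finset α → Finset α) : Prop :=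
  ∀ A B : Finset α, A ⊆ B → (C A).card ≤ (C B).card

def GSpec {α : Type*} [DecidableEq α] (F : Set (Finset α)) (w : α → ℝ) (A G : Finset α) : Prop :=
  G ⊆ A ∧ G ∈ F ∧ ∀ x ∈ A, x ∉ G → insert x (G.filter (fun y => w x < w y)) ∉ F

theorem greedyAux_spec {α : Type*} [DecidableEq α] (F : Set (Finset α))
    (hd : ∀ Y ∈ F, ∀ Z ⊆ Y, Z ∈ F) (w : α → ℝ) (hw : Function.Injective w) (A : Finset α) :
    ∀ (n : ℕ) (S : Finset α), S ⊆ A → S ∈ F → (A \ S).card ≤ n →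
      (∀ x ∈ A, x ∉ S → insert x (S.filter (fun y => w x < w y)) ∉ F ∨ ∀ y ∈ S, w x < w y) →
      GSpec F w A (greedyAux F w n A S) := by
  classical
  intro n
  induction n with
  | zero =>
    intro S hS hF hc _
    rw [greedyAux]
    refine ⟨hS, hF, fun x hx hxS => ?_⟩
    have : x ∈ A \ S := by simp [hx, hxS]
    rw [Finset.card_eq_zero.mp (Nat.le_zero.mp hc)] at this
    simp at this
  | succ n ih =>
    intro S hS hF hc hinv
    rw [greedyAux]
    split_ifs with h
    · generalize_proofs hp
      obtain ⟨hm, hmax⟩ := hp.choose_spec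
      generalize hp.choose = m at hm hmax ⊢
      simp only [Finset.mem_filter, Finset.mem_sdiff] at hm hmax
      obtain ⟨⟨hmA, hmS⟩, Y, hY, hYs⟩ := hm
      refine ih _ (Finset.insert_subset hmA hS) (hd _ hY _ hYs) ?_ ?_
      · have : (A \ insert m S).card < (A \ S).card := by
          apply Finset.card_lt_card
          refine ⟨fun z hz => ?_, fun hh => ?_⟩
          · simp at hz ⊢; tauto
          · have := @hh m (by simp [hmA, hmS])
            simp at this
        omega
      · intro x hx hxS
        simp only [Finset.mem_insert, not_or] at hxS
        rcases hinv x hx hxS.2 with h1 | h1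
        · left
          intro h2
          exact h1 (hd _ h2 _ (Finset.insert_subset_insert _
            (Finset.filter_subset_filter _ (Finset.subset_insert _ _))))
        · by_cases h2 : insert x S ∈ F
          · right
            intro y hy
            rcases Finset.mem_insert.mp hy with rfl | hy
            · exact lt_of_le_of_ne (hmax x ⟨⟨hx, hxS.2⟩, _, h2, subset_rfl⟩)
                (fun e => hxS.1 (hw e))
            · exact h1 y hy
          · left
            intro h3
            refine h2 (hd _ h3 _ (Finset.insert_subset_insert _ fun z hz => ?_))
            simp [hz, h1 z hz]
    · refine ⟨hS, hF, fun x hx hxS h2 => ?_⟩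
      rcases hinv x hx hxS with h1 | h1
      · exact h1 h2
      · apply h
        refine ⟨x, ?_⟩
        simp only [Finset.mem_filter, Finset.mem_sdiff]
        refine ⟨⟨hx, hxS⟩, _, h2, Finset.insert_subset_insert _ fun z hz => ?_⟩
        simp [hz, h1 z hz]

theorem greedy_spec {α : Type*} [DecidableEq α] (F : Set (Finset α))
    (hd : ∀ Y ∈ F, ∀ Z ⊆ Y, Z ∈ F) (h0 : ∅ ∈ F) (w : α → ℝ) (hw : Function.Injective w)
    (A : Finset α) : GSpec F w A (greedy F w A) := by
  apply greedyAux_spec F hd w hw A _ _ (Finset.empty_subset _) h0 (by simp)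
  simp

theorem GSpec.unique_aux {α : Type*} [DecidableEq α] {F : Set (Finset α)}
    (hd : ∀ Y ∈ F, ∀ Z ⊆ Y, Z ∈ F) {w : α → ℝ} {A G H : Finset α}
    (hG : GSpec F w A G) (hH : GSpec F w A H) {x : α} (hx : x ∈ G) (hx' : x ∉ H)
    (hm : ∀ y, w x < w y → (y ∈ G ↔ y ∈ H)) : False := by
  refine hH.2.2 x (hG.1 hx) hx' (hd _ hG.2.1 _ fun z hz => ?_)
  simp only [Finset.mem_insert, Finset.mem_filter] at hz
  rcases hz with rfl | ⟨h1, h2⟩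
  · exact hx
  · exact (hm z h2).2 h1

theorem GSpec.unique {α : Type*} [DecidableEq α] {F : Set (Finset α)}
    (hd : ∀ Y ∈ F, ∀ Z ⊆ Y, Z ∈ F) {w : α → ℝ} {A G H : Finset α}
    (hG : GSpec F w A G) (hH : GSpec F w A H) : G = H := by
  by_contra hne
  have hn : ((G \ H) ∪ (H \ G)).Nonempty := by
    rw [Finset.nonempty_iff_ne_empty]
    intro h
    apply hne
    ext z
    have := Finset.ext_iff.mp h z
    simp at this
    tauto
  obtain ⟨x, hx, hmax⟩ := Finset.exists_max_image _ w hn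
  have hm : ∀ y, w x < w y → (y ∈ G ↔ y ∈ H) := by
    intro y hy
    by_contra hc
    have := hmax y (by simp; tauto)
    linarith
  simp only [Finset.mem_union, Finset.mem_sdiff] at hx
  rcases hx with hx | hx
  · exact GSpec.unique_aux hd hG hH hx.1 hx.2 hm
  · exact GSpec.unique_aux hd hH hG hx.1 hx.2 (fun y hy => (hm y hy).symm)

theorem matroid_extend {α : Type*} [DecidableEq α] [Fintype α] {F : Set (Finset α)}
    (hM : IsMatroidIndep F) : ∀ (n : ℕ) (I K : Finset α), I ∈ F → K ∈ F → K.card - I.card ≤ n →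
      ∃ I' ∈ F, I ⊆ I' ∧ I' ⊆ I ∪ K ∧ K.card ≤ I'.card := by
  intro n
  induction n with
  | zero => exact fun I K hI _ hc => ⟨I, hI, subset_rfl, Finset.subset_union_left, by omega⟩
  | succ n ih =>
    intro I K hI hK hc
    by_cases h : I.card < K.card
    · obtain ⟨x, hx, hxI⟩ := hM.2.2 I hI K hK h
      rw [Finset.mem_sdiff] at hx
      obtain ⟨I', h1, h2, h3, h4⟩ := ih _ K hxI hK
        (by rw [Finset.card_insert_of_notMem hx.2]; omega)
      refine ⟨I', h1, (Finset.subset_insert _ _).trans h2, fun z hz => ?_, h4⟩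
      have := h3 hz
      simp only [Finset.mem_union, Finset.mem_insert] at this ⊢
      rcases this with (rfl | h) | h
      · exact Or.inr hx.1
      · exact Or.inl h
      · exact Or.inr h
    · exact ⟨I, hI, subset_rfl, Finset.subset_union_left, by omega⟩

theorem no_bad {α : Type*} [DecidableEq α] [Fintype α] {F : Set (Finset α)}
    (hd : ∀ Y ∈ F, ∀ Z ⊆ Y, Z ∈ F) (h0 : ∅ ∈ F)
    (hP : ∀ w : α → ℝ, Function.Injective w → PathIndependent (greedy F w))
    (D : Finset α) (a b c : α) (ha : a ∉ D) (hb : b ∉ D) (hc : c ∉ D) (hab : a ≠ b) (hac : a ≠ c)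
    (hbc : b ≠ c) (h1 : insert a D ∈ F) (h2 : insert b (insert c D) ∈ F)
    (h3 : insert b (insert a D) ∉ F) (h4 : insert c (insert a D) ∉ F) : False := by
  let e := Fintype.equivFin α
  let w : α → ℝ := fun x => if x = b then -1 else if x = a then -2 else if x = c then -3
    else ((e x : ℕ) : ℝ)
  have wb : w b = -1 := by simp [w]
  have wa : w a = -2 := by simp [w, hab]
  have wc : w c = -3 := by simp [w, hac.symm, hbc.symm]
  have wo : ∀ x, x ≠ b → x ≠ a → x ≠ c → w x = ((e x : ℕ) : ℝ) := by
    intro x h1 h2 h3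
    simp [w, h1, h2, h3]
  have wn : ∀ x, x ≠ b → x ≠ a → x ≠ c → 0 ≤ w x := by
    intro x h1 h2 h3
    rw [wo x h1 h2 h3]
    positivity
  have hw : Function.Injective w := by
    intro x y hxy
    by_cases x1 : x = b <;> by_cases x2 : x = a <;> by_cases x3 : x = c <;>
    by_cases y1 : y = b <;> by_cases y2 : y = a <;> by_cases y3 : y = c <;>
    first
    | (subst_vars; first | rfl | contradiction)
    | (rw [wo x x1 x2 x3, wo y y1 y2 y3] at hxy
       exact e.injective (Fin.ext (by exact_mod_cast hxy)))
    | (have := wn x x1 x2 x3; subst_vars; linarith)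
    | (have := wn y y1 y2 y3; subst_vars; linarith)
    | (subst_vars; linarith)
  have wD : ∀ x ∈ D, 0 ≤ w x := by
    intro x hx
    apply wn <;> rintro rfl <;> contradiction
  have key : ∀ A G, GSpec F w A G → greedy F w A = G := fun A G h =>
    GSpec.unique hd (greedy_spec F hd h0 w hw A) h
  have g1 : greedy F w (insert c (insert a D)) = insert a D := by
    apply key
    refine ⟨Finset.subset_insert _ _, h1, ?_⟩
    intro x hx hx'
    obtain rfl : x = c := by
      simp only [Finset.mem_insert] at hx hx'; tauto
    rwa [Finset.filter_true_of_mem]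
    intro y hy
    rcases Finset.mem_insert.mp hy with rfl | hy
    · linarith
    · linarith [wD y hy]
  have g2 : greedy F w (insert a D ∪ {b}) = insert b D := by
    apply key
    refine ⟨?_, hd _ h2 _ (Finset.insert_subset_insert _ (Finset.subset_insert _ _)), ?_⟩
    · intro z hz
      simp only [Finset.mem_insert, Finset.mem_union, Finset.mem_singleton] at hz ⊢; tauto
    · intro x hx hx'
      obtain rfl : x = a := by
        simp only [Finset.mem_insert, Finset.mem_union, Finset.mem_singleton] at hx hx'; tauto
      rw [Finset.filter_true_of_mem]
      · rwa [Finset.insert_comm]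
      intro y hy
      rcases Finset.mem_insert.mp hy with rfl | hy
      · linarith
      · linarith [wD y hy]
  have g3 : greedy F w (insert c (insert a D) ∪ {b}) = insert b (insert c D) := by
    apply key
    refine ⟨?_, h2, ?_⟩
    · intro z hz
      simp only [Finset.mem_insert, Finset.mem_union, Finset.mem_singleton] at hz ⊢; tauto
    · intro x hx hx' hF
      obtain rfl : x = a := by
        simp only [Finset.mem_insert, Finset.mem_union, Finset.mem_singleton] at hx hx'; tauto
      apply h3
      refine hd _ hF _ ?_
      intro z hz
      simp only [Finset.mem_insert, Finset.mem_filter] at hz ⊢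
      rcases hz with rfl | rfl | hz
      · right; exact ⟨Or.inl rfl, by linarith⟩
      · exact Or.inl rfl
      · right; exact ⟨Or.inr (Or.inr hz), by linarith [wD z hz]⟩
  have := hP w hw (insert c (insert a D)) {b}
  rw [g1, g2, g3] at this
  have hcm : c ∈ insert b D := by rw [← this]; simp
  simp only [Finset.mem_insert] at hcm
  rcases hcm with h | h
  · exact hbc h.symm
  · exact hc h

theorem exch {α : Type*} [DecidableEq α] [Fintype α] {F : Set (Finset α)}
    (hd : ∀ Y ∈ F, ∀ Z ⊆ Y, Z ∈ F) (h0 : ∅ ∈ F)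
    (hP : ∀ w : α → ℝ, Function.Injective w → PathIndependent (greedy F w)) :
    ∀ (n : ℕ) (Y₁ Y₂ : Finset α), (Y₁ \ Y₂).card ≤ n → Y₁ ∈ F → Y₂ ∈ F → Y₁.card < Y₂.card →
      ∃ x ∈ Y₂ \ Y₁, insert x Y₁ ∈ F := by
  intro n
  have base : ∀ (Y₁ Y₂ : Finset α), Y₁ \ Y₂ = ∅ → Y₁ ∈ F → Y₂ ∈ F → Y₁.card < Y₂.card →
      ∃ x ∈ Y₂ \ Y₁, insert x Y₁ ∈ F := by
    intro Y₁ Y₂ hn _ hY₂ hc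
    obtain ⟨x, hx, hx'⟩ := Finset.exists_mem_notMem_of_card_lt_card hc
    exact ⟨x, by simp [hx, hx'], hd _ hY₂ _
      (Finset.insert_subset hx (Finset.sdiff_eq_empty_iff_subset.mp hn))⟩
  induction n with
  | zero => exact fun Y₁ Y₂ hn => base Y₁ Y₂ (Finset.card_eq_zero.mp (Nat.le_zero.mp hn))
  | succ n ih =>
    intro Y₁ Y₂ hn hY₁ hY₂ hc
    rcases Finset.eq_empty_or_nonempty (Y₁ \ Y₂) with he | ⟨a, ha⟩
    · exact base _ _ he hY₁ hY₂ hc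
    have ha' := Finset.mem_sdiff.mp ha
    by_contra hno
    push Not at hno
    have hcard : ((Y₁ \ Y₂).erase a).card ≤ n := by
      rw [Finset.card_erase_of_mem ha]; omega
    have hce := Finset.card_erase_add_one ha'.1
    obtain ⟨b, hb, hbF⟩ := ih (Y₁.erase a) Y₂
      ((Finset.card_le_card (by intro z; simp; tauto)).trans hcard)
      (hd _ hY₁ _ (Finset.erase_subset _ _)) hY₂ (by omega)
    simp only [Finset.mem_sdiff] at hb
    have hba : b ≠ a := by rintro rfl; exact ha'.2 hb.1
    have hbc := Finset.card_insert_of_notMem hb.2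
    obtain ⟨c, hc', hcF⟩ := ih (insert b (Y₁.erase a)) Y₂
      ((Finset.card_le_card (by
        intro z hz
        simp only [Finset.mem_sdiff, Finset.mem_insert, Finset.mem_erase] at hz ⊢
        rcases hz with ⟨rfl | h, h'⟩
        · exact absurd hb.1 h'
        · tauto)).trans hcard)
      hbF hY₂ (by omega)
    simp only [Finset.mem_sdiff, Finset.mem_insert, not_or] at hc'
    have hca : c ≠ a := by rintro rfl; exact ha'.2 hc'.1
    refine no_bad hd h0 hP (Y₁.erase a) a b c (by simp) hb.2 hc'.2.2 hba.symm hca.symm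
      (Ne.symm hc'.2.1) ?_ ?_ ?_ ?_
    · rwa [Finset.insert_erase ha'.1]
    · rwa [Finset.insert_comm]
    · rw [Finset.insert_erase ha'.1]
      apply hno
      have := hb.2
      simp only [Finset.mem_erase] at this
      simp only [Finset.mem_sdiff]; tauto
    · rw [Finset.insert_erase ha'.1]
      apply hno
      have := hc'.2.2
      simp only [Finset.mem_erase] at this
      simp only [Finset.mem_sdiff]; tauto

/-- if the greedy rule on a nonempty downward-closed collection `F`
satisfies path independence for every injective weight function, then `(α, F)` is a
matroid; conversely, if `(α, F)` is a matroid then for all (injective) weight functions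
the greedy rule satisfies path independence and the law of aggregate demand. -/
theorem greedy_pathIndependent_iff_matroid {α : Type*} [DecidableEq α] [Fintype α]
    (F : Set (Finset α)) (hne : F.Nonempty) :
    ((∀ Y ∈ F, ∀ Z ⊆ Y, Z ∈ F) →
      (∀ w : α → ℝ, Function.Injective w → PathIndependent (greedy F w)) →
        IsMatroidIndep F) ∧
    (IsMatroidIndep F →
      ∀ w : α → ℝ, Function.Injective w →
        PathIndependent (greedy F w) ∧ LawOfAggregateDemand (greedy F w)) := by
  constructor
  · intro hd hP
    obtain ⟨Y, hY⟩ := hne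
    have h0 : ∅ ∈ F := hd _ hY _ (Finset.empty_subset _)
    exact ⟨h0, hd, fun Y₁ h1 Y₂ h2 hc => exch hd h0 hP _ Y₁ Y₂ le_rfl h1 h2 hc⟩
  · intro hM w hw
    have hd := hM.2.1
    have sp := greedy_spec F hd hM.1 w hw
    constructor
    · intro A B
      refine GSpec.unique hd (A := greedy F w A ∪ B) ?_ (sp _)
      have hG := sp (A ∪ B)
      have hA := sp A
      generalize greedy F w (A ∪ B) = G at hG ⊢
      generalize greedy F w A = H at hA ⊢
      refine ⟨?_, hG.2.1, fun x hx => hG.2.2 x ?_⟩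
      · intro x hx
        by_contra hxn
        simp only [Finset.mem_union, not_or] at hxn
        have hxA : x ∈ A := by
          have := hG.1 hx
          simp only [Finset.mem_union] at this
          tauto
        have hI := hA.2.2 x hxA hxn.1
        have hxJ : x ∉ G.filter (fun y => w x < w y) := by simp
        have hJ : insert x (G.filter (fun y => w x < w y)) ∈ F :=
          hd _ hG.2.1 _ (Finset.insert_subset hx (Finset.filter_subset _ _))
        obtain ⟨I', h1, h2, h3, h4⟩ := matroid_extend hM _ (H.filter (fun y => w x < w y)) _
          (hd _ hA.2.1 _ (Finset.filter_subset _ _)) hJ le_rfl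
        rw [Finset.card_insert_of_notMem hxJ] at h4
        have hxI : x ∉ I' := fun h => hI (hd _ h1 _ (Finset.insert_subset h h2))
        obtain ⟨y, hy, hyF⟩ := hM.2.2 _ (hd _ hG.2.1 _ (Finset.filter_subset _ _)) _ h1
          (Nat.lt_of_succ_le h4)
        rw [Finset.mem_sdiff] at hy
        have hy2 : y ∈ A ∪ B ∧ w x < w y := by
          have := h3 hy.1
          simp only [Finset.mem_union, Finset.mem_insert, Finset.mem_filter] at this
          rcases this with h | rfl | h
          · exact ⟨Finset.mem_union_left _ (hA.1 h.1), h.2⟩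
          · exact absurd hy.1 hxI
          · exact ⟨hG.1 h.1, h.2⟩
        refine hG.2.2 y hy2.1 (fun h => hy.2 (by simp [h, hy2.2])) (hd _ hyF _ ?_)
        refine Finset.insert_subset_insert _ fun z hz => ?_
        simp only [Finset.mem_filter] at hz ⊢
        exact ⟨hz.1, hy2.2.trans hz.2⟩
      · have := hA.1
        simp only [Finset.mem_union] at hx ⊢
        rcases hx with h | h
        · exact Or.inl (this h)
        · exact Or.inr h
    · intro A B hAB
      by_contra hlt
      push Not at hlt
      obtain ⟨x, hx, hxF⟩ := hM.2.2 _ (sp B).2.1 _ (sp A).2.1 hlt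
      rw [Finset.mem_sdiff] at hx
      exact (sp B).2.2 x (hAB ((sp A).1 hx.1)) hx.2
        (hd _ hxF _ (Finset.insert_subset_insert _ (Finset.filter_subset _ _)))
end
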